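/- Let E belong to the class A(λ,n,m), let F = ⋃_{j=1}^t g_j(F) be a dust-like self-similar set, let f : F → E be a bi-Lipschitz bijection, and let s = dim_H E = dim_H F. Then there exist a finite word w = j₁⋯j_{k*} over {1,…,t} and a constant d̄ > 0 such that for every Borel set B ⊆ F_w one has H^s(f(B)) = d̄ · H^s(B). -/

import Mathlib

open MeasureTheory Polynomial

/-- The class `𝒜(λ, n, m)` of self-similar subsets of `ℝ` with `m` exact overlaps,
generated by `n` similitudes `fᵢ x = λ x + bᵢ` of the same ratio `λ`. -/
def IsInClassA (lam : ℝ) (n m : ℕ) (E : Set ℝ) : Prop :=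
  lam ∈ Set.Ioo (0 : ℝ) 1 ∧ 1 ≤ m ∧ m + 2 ≤ n ∧
  ∃ b : ℕ → ℝ,
    b 0 = 0 ∧ b (n - 1) = 1 - lam ∧
    (∀ i, i + 1 < n → b i < b (i + 1)) ∧
    (∀ i, i + 1 < n →
      (Set.Icc (b i) (b i + lam) ∩ Set.Icc (b (i + 1)) (b (i + 1) + lam)).Nonempty →
        volume (Set.Icc (b i) (b i + lam) ∩ Set.Icc (b (i + 1)) (b (i + 1) + lam)) = 0 ∨
        volume (Set.Icc (b i) (b i + lam) ∩ Set.Icc (b (i + 1)) (b (i + 1) + lam)) =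
          ENNReal.ofReal (lam * lam)) ∧
    {i : ℕ | i + 1 < n ∧
      volume (Set.Icc (b i) (b i + lam) ∩ Set.Icc (b (i + 1)) (b (i + 1) + lam)) =
        ENNReal.ofReal (lam * lam)}.ncard = m ∧
    E.Nonempty ∧ IsCompact E ∧
    E = ⋃ i ∈ Finset.range n, (fun x => lam * x + b i) '' E

/-- A dust-like self-similar set in `ℝ^d`: the attractor of `t ≥ 2` contracting similitudes
whose images are pairwise disjoint (strong separation condition). -/
def IsDustLike {d : ℕ} (F : Set (EuclideanSpace ℝ (Fin d))) : Prop :=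
  F.Nonempty ∧ IsCompact F ∧
  ∃ t : ℕ, 2 ≤ t ∧
    ∃ (g : Fin t → EuclideanSpace ℝ (Fin d) → EuclideanSpace ℝ (Fin d)) (r : Fin t → ℝ),
      (∀ j, r j ∈ Set.Ioo (0 : ℝ) 1) ∧
      (∀ j x y, dist (g j x) (g j y) = r j * dist x y) ∧
      F = ⋃ j, g j '' F ∧
      (∀ j j', j ≠ j' → Disjoint (g j '' F) (g j' '' F))

/-- Lipschitz equivalence of two sets in (possibly different) metric spaces. -/
def LipEquiv {X Y : Type*} [MetricSpace X] [MetricSpace Y] (A : Set X) (B : Set Y) : Prop :=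
  ∃ f : A → B, Function.Bijective f ∧ ∃ C : ℝ, 0 < C ∧
    ∀ x y : A, C⁻¹ * dist x y ≤ dist (f x) (f y) ∧ dist (f x) (f y) ≤ C * dist x y

/-- The copy `F_w = g_{w₁} ∘ ⋯ ∘ g_{w_k}(F)` of `F` indexed by a finite word `w`. -/
def cylinder {X : Type*} {t : ℕ} (g : Fin t → X → X) (F : Set X) : List (Fin t) → Set X
  | [] => F
  | j :: w => g j '' cylinder g F w

/-!
Compare the measures `ν B = μH[s] (f '' B)` and `μ B = μH[s] B` on the cylinders of `F`. The density
`ν F_w / μ F_w` is bounded since `f` is Lipschitz, and it is a weighted average of the densities of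
the children `F_{wj}`. The overlaps of `E` being exact, copies of `E` of the same level occur in only
finitely many relative positions within bounded distance, so that pieces of `E` of comparable
diameter and isolation have, up to scaling, finitely many possible measures. As `f` is bi-Lipschitz,
the sets `f '' F_w` are such pieces, and the quotient of the density of a child by that of its parent
takes finitely many values. Hence a cylinder whose density is close enough to the supremum has no
child of larger density, and by averaging all its descendants have its density. Cylinders generate
the Borel sets of `F`.
-/

section

open Set Filter Topology Metric
open scoped ENNReal NNReal

theorem exists_pos_forall_le_of_finite {α : Type*} {s : Set α} (hs : s.Finite) {f : α → ℝ}
    (hf : ∀ x ∈ s, 0 < f x) : ∃ ε > 0, ∀ x ∈ s, ε ≤ f x := by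
  have h : ∀ᶠ ε in 𝓝[>] (0 : ℝ), ∀ x ∈ s, ε ≤ f x := (eventually_all_finite hs).2 fun x hx =>
    nhdsWithin_le_nhds (Iic_mem_nhds (hf x hx))
  exact (eventually_mem_nhdsWithin.and h).exists

/-! ### Finite type -/

section FiniteType

variable {ι V : Type*} [NormedAddCommGroup V] [NormedSpace ℝ V] {lam : ℝ} {b : ι → V}

/-- The translation vectors of the `k`-fold compositions of the maps `x ↦ lam • x + b i`. -/
def offsets (lam : ℝ) (b : ι → V) : ℕ → Set V
  | 0 => {0}
  | k + 1 => image2 (fun o v => o + lam ^ k • v) (offsets lam b k) (range b)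

/-- The differences of level-`k` translation vectors, rescaled to unit size: the relative positions
of two level-`k` copies of the attractor, seen from one of them. -/
def relativeOffsets (lam : ℝ) (b : ι → V) (k : ℕ) : Set V :=
  image2 (fun o o' => (lam ^ k)⁻¹ • (o - o')) (offsets lam b k) (offsets lam b k)

/-- The finite type condition for the homogeneous system `x ↦ lam • x + b i`: up to scaling, two
copies of the same level lie in finitely many relative positions at any bounded distance. -/
def IsFiniteType (lam : ℝ) (b : ι → V) : Prop :=
  ∀ M : ℝ, ((⋃ k, relativeOffsets lam b k) ∩ closedBall 0 M).Finite

theorem exists_relativeOffsets_of_succ (hlam : lam ≠ 0) {k : ℕ} {v : V}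
    (hv : v ∈ relativeOffsets lam b (k + 1)) :
    ∃ d ∈ relativeOffsets lam b k, ∃ i j, v = lam⁻¹ • (d + (b i - b j)) := by
  obtain ⟨_, ⟨o, ho, _, ⟨i, rfl⟩, rfl⟩, _, ⟨o', ho', _, ⟨j, rfl⟩, rfl⟩, rfl⟩ := hv
  refine ⟨_, mem_image2_of_mem ho ho', i, j, ?_⟩
  have hk : lam ^ k ≠ 0 := pow_ne_zero k hlam
  calc (lam ^ (k + 1))⁻¹ • (o + lam ^ k • b i - (o' + lam ^ k • b j))
      = (lam ^ (k + 1))⁻¹ • (o - o' + lam ^ k • (b i - b j)) := by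
        rw [smul_sub (lam ^ k), add_sub_add_comm]
    _ = lam⁻¹ • (lam ^ k)⁻¹ • (o - o' + lam ^ k • (b i - b j)) := by
        rw [smul_smul, pow_succ', mul_inv]
    _ = lam⁻¹ • ((lam ^ k)⁻¹ • (o - o') + (b i - b j)) := by
        rw [smul_add (lam ^ k)⁻¹, inv_smul_smul₀ hk]

theorem eq_iUnion_offsets {E : Set V} (hE : E = ⋃ i, (fun x => lam • x + b i) '' E) (k : ℕ) :
    E = ⋃ o ∈ offsets lam b k, (fun x => lam ^ k • x + o) '' E := by
  induction k with
  | zero => simp [offsets]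
  | succ k ih =>
    have hcomp (o : V) : (fun x => lam ^ k • x + o) '' E =
        ⋃ i, (fun x => lam ^ (k + 1) • x + (o + lam ^ k • b i)) '' E := by
      conv_lhs => rw [hE]
      simp only [image_iUnion, image_image, smul_add, smul_smul, ← pow_succ]
      refine iUnion_congr fun i => image_congr fun x _ => ?_
      abel
    conv_lhs => rw [ih]
    simp only [hcomp, offsets, biUnion_image2, biUnion_range]

theorem norm_sub_one_le_mul {d v β : V} (hlam : 0 < lam) (hβ : ‖β‖ ≤ 1 - lam)
    (hv : v = lam⁻¹ • (d + β)) : ‖d‖ - 1 ≤ lam * (‖v‖ - 1) := by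
  have hd : d = lam • v - β := by rw [hv, smul_inv_smul₀ hlam.ne', add_sub_cancel_right]
  have : ‖d‖ ≤ lam * ‖v‖ + ‖β‖ := by
    rw [hd]
    exact (norm_sub_le _ _).trans_eq (by rw [norm_smul, Real.norm_of_nonneg hlam.le])
  linarith

theorem exists_mem_core_or_le_norm [Finite ι] (hlam : lam ∈ Ioo 0 1) {C : Set V} (hC : C.Finite)
    (h0 : 0 ∈ C) (hb : ∀ i j, ‖b i - b j‖ ≤ 1 - lam)
    (hstep : ∀ c ∈ C, ∀ i j, lam⁻¹ • (c + (b i - b j)) ∈ C ∨ 1 < ‖lam⁻¹ • (c + (b i - b j))‖) :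
    ∃ ε > 0, ∀ k, ∀ v ∈ relativeOffsets lam b k, v ∈ C ∨ 1 + ε ≤ ‖v‖ := by
  let exits : Set V :=
    image2 (fun c (p : ι × ι) => lam⁻¹ • (c + (b p.1 - b p.2))) C univ ∩ {v | 1 < ‖v‖}
  have hexits : exits.Finite := (hC.image2 _ finite_univ).inter_of_left _
  obtain ⟨ε, hε, hgap⟩ := exists_pos_forall_le_of_finite hexits
    (f := fun v => ‖v‖ - 1) fun v hv => sub_pos.2 hv.2
  refine ⟨ε, hε, fun k => ?_⟩
  induction k with
  | zero =>
    rintro _ ⟨o, rfl, o', rfl, rfl⟩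
    exact Or.inl (by simpa only [sub_self, smul_zero] using h0)
  | succ k ih =>
    intro v hv
    obtain ⟨d, hd, i, j, hvd⟩ := exists_relativeOffsets_of_succ hlam.1.ne' hv
    rcases ih d hd with hdC | hdε
    · subst hvd
      refine (hstep d hdC i j).imp_right fun hout => ?_
      linarith [hgap _ ⟨mem_image2_of_mem hdC (mem_univ (i, j)), hout⟩]
    · have hexcess := norm_sub_one_le_mul hlam.1 (hb i j) hvd
      have : lam * (‖v‖ - 1) ≤ ‖v‖ - 1 :=
        mul_le_of_le_one_left (by nlinarith [hlam.1]) hlam.2.le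
      exact Or.inr (by linarith)

theorem IsFiniteType.of_core [Finite ι] (hlam : lam ∈ Ioo 0 1) {C : Set V} (hC : C.Finite)
    (h0 : 0 ∈ C) (hb : ∀ i j, ‖b i - b j‖ ≤ 1 - lam)
    (hstep : ∀ c ∈ C, ∀ i j, lam⁻¹ • (c + (b i - b j)) ∈ C ∨ 1 < ‖lam⁻¹ • (c + (b i - b j))‖) :
    IsFiniteType lam b := by
  obtain ⟨ε, hε, hcore⟩ := exists_mem_core_or_le_norm hlam hC h0 hb hstep
  -- The excess `‖v‖ - 1` shrinks by the factor `lam` from a relative offset to its predecessor.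
  have hfin (j : ℕ) : ((⋃ k, relativeOffsets lam b k) ∩
      {v | lam ^ j * (‖v‖ - 1) < ε}).Finite := by
    induction j with
    | zero =>
      refine hC.subset fun v ⟨hv, hvε⟩ => ?_
      obtain ⟨k, hk⟩ := mem_iUnion.1 hv
      have hvε : lam ^ 0 * (‖v‖ - 1) < ε := hvε
      exact (hcore k v hk).resolve_right (by linarith)
    | succ j ih =>
      refine (hC.union (ih.image2 (fun d p => lam⁻¹ • (d + (b p.1 - b p.2)))
        (finite_univ (α := ι × ι)))).subset fun v ⟨hv, hvε⟩ => ?_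
      obtain ⟨_ | k, hk⟩ := mem_iUnion.1 hv
      · obtain ⟨o, rfl, o', rfl, rfl⟩ := hk
        exact Or.inl (by simpa only [sub_self, smul_zero] using h0)
      · obtain ⟨d, hd, i, i', hvd⟩ := exists_relativeOffsets_of_succ hlam.1.ne' hk
        have hexcess := norm_sub_one_le_mul hlam.1 (hb i i') hvd
        have hdε : lam ^ j * (‖d‖ - 1) < ε :=
          (mul_le_mul_of_nonneg_left hexcess (pow_nonneg hlam.1.le j)).trans_lt
            (by rwa [← mul_assoc, ← pow_succ])
        exact Or.inr ⟨d, ⟨mem_iUnion.2 ⟨k, hd⟩, hdε⟩, (i, i'), mem_univ _, hvd.symm⟩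
  intro M
  have hlim : Tendsto (fun j => lam ^ j * (M - 1)) atTop (𝓝 (0 * (M - 1))) :=
    (tendsto_pow_atTop_nhds_zero_of_lt_one hlam.1.le hlam.2).mul_const _
  obtain ⟨j, hj⟩ := (hlim.eventually_lt_const (by rwa [zero_mul])).exists
  refine (hfin j).subset fun v ⟨hv, hvM⟩ => ⟨hv, lt_of_le_of_lt ?_ hj⟩
  have := mem_closedBall_zero_iff.1 hvM
  exact mul_le_mul_of_nonneg_left (by linarith) (pow_nonneg hlam.1.le j)

end FiniteType

/-! ### The class `𝒜(λ, n, m)` -/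

section ClassA

variable {lam : ℝ} {b : ℕ → ℝ} {n : ℕ}

theorem volume_inter_Icc_translate {x y l : ℝ} (hxy : x ≤ y) :
    volume (Icc x (x + l) ∩ Icc y (y + l)) = ENNReal.ofReal (x + l - y) := by
  rw [Icc_inter_Icc, sup_eq_right.2 hxy, inf_eq_left.2 (by gcongr), Real.volume_Icc]

/-- The possible distances between left endpoints of first-level intervals of a set of class
`𝒜(λ, n, m)`: two such intervals coincide, overlap exactly, or have disjoint interiors. -/
def IsGap (lam x : ℝ) : Prop :=
  x = 0 ∨ x = lam * (1 - lam) ∨ lam ≤ x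

theorem step_eq_of_volume_overlap {x y : ℝ} (hlam : 0 < lam) (hxy : x ≤ y)
    (h : volume (Icc x (x + lam) ∩ Icc y (y + lam)) = ENNReal.ofReal (lam * lam)) :
    y - x = lam * (1 - lam) := by
  have hpos : 0 < ENNReal.ofReal (x + lam - y) := by
    rw [← volume_inter_Icc_translate hxy, h]
    exact ENNReal.ofReal_pos.2 (by positivity)
  rw [volume_inter_Icc_translate hxy, ENNReal.ofReal_eq_ofReal_iff
    (ENNReal.ofReal_pos.1 hpos).le (by positivity)] at h
  linarith

theorem le_step_of_volume_overlap_ne {x y : ℝ} (hxy : x ≤ y)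
    (h : (Icc x (x + lam) ∩ Icc y (y + lam)).Nonempty →
      volume (Icc x (x + lam) ∩ Icc y (y + lam)) = 0 ∨
      volume (Icc x (x + lam) ∩ Icc y (y + lam)) = ENNReal.ofReal (lam * lam))
    (hne : volume (Icc x (x + lam) ∩ Icc y (y + lam)) ≠ ENNReal.ofReal (lam * lam)) :
    lam ≤ y - x := by
  have hzero : volume (Icc x (x + lam) ∩ Icc y (y + lam)) = 0 := by
    by_contra h0
    exact (h (nonempty_of_measure_ne_zero h0)).elim h0 hne
  rw [volume_inter_Icc_translate hxy, ENNReal.ofReal_eq_zero] at hzero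
  linarith

theorem isGap_of_volume_overlap {x y : ℝ} (hlam : 0 < lam) (hxy : x ≤ y)
    (h : (Icc x (x + lam) ∩ Icc y (y + lam)).Nonempty →
      volume (Icc x (x + lam) ∩ Icc y (y + lam)) = 0 ∨
      volume (Icc x (x + lam) ∩ Icc y (y + lam)) = ENNReal.ofReal (lam * lam)) :
    IsGap lam (y - x) := by
  by_cases heq : volume (Icc x (x + lam) ∩ Icc y (y + lam)) = ENNReal.ofReal (lam * lam)
  · exact Or.inr (Or.inl (step_eq_of_volume_overlap hlam hxy heq))
  · exact Or.inr (Or.inr (le_step_of_volume_overlap_ne hxy h heq))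

theorem IsGap.nonneg {x : ℝ} (hlam : lam ∈ Ioo 0 1) (hx : IsGap lam x) : 0 ≤ x := by
  rcases hx with rfl | rfl | hx
  · exact le_rfl
  · exact mul_nonneg hlam.1.le (sub_nonneg.2 hlam.2.le)
  · exact hlam.1.le.trans hx

theorem IsGap.add {x y : ℝ} (hlam : lam ∈ Ioo 0 1) (hhalf : lam ≤ 1 / 2) (hx : IsGap lam x)
    (hy : IsGap lam y) : IsGap lam (x + y) := by
  have hx0 := hx.nonneg hlam
  have hy0 := hy.nonneg hlam
  -- Two exact overlaps add up to `2 * lam * (1 - lam) ≥ lam`, as `lam ≤ 1 / 2`.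
  have htwo : lam ≤ lam * (1 - lam) + lam * (1 - lam) := by nlinarith [hlam.1]
  rcases hx with rfl | rfl | hx
  · rwa [zero_add]
  · rcases hy with rfl | rfl | hy
    · exact Or.inr (Or.inl (add_zero _))
    · exact Or.inr (Or.inr htwo)
    · exact Or.inr (Or.inr (by linarith))
  · exact Or.inr (Or.inr (by linarith))

theorem IsGap.sub_of_step (hlam : lam ∈ Ioo 0 1) (hhalf : lam ≤ 1 / 2)
    (hstep : ∀ i, i + 1 < n → IsGap lam (b (i + 1) - b i)) {i j : ℕ} (hij : i ≤ j) (hj : j < n) :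
    IsGap lam (b j - b i) := by
  induction j, hij using Nat.le_induction with
  | base => exact Or.inl (sub_self _)
  | succ j _ ih =>
    rw [← sub_add_sub_cancel]
    exact (hstep j hj).add hlam hhalf (ih (Nat.lt_of_succ_lt hj))

theorem IsGap.abs_inv_mul {x : ℝ} (hlam : 0 < lam) (hx : IsGap lam |x|) :
    |lam⁻¹ * x| ∈ ({0, 1 - lam, 1} : Set ℝ) ∨ 1 < |lam⁻¹ * x| := by
  rw [abs_mul, abs_of_pos (inv_pos.2 hlam)]
  rcases hx with hx | hx | hx
  · exact Or.inl (Or.inl (by rw [hx, mul_zero]))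
  · exact Or.inl (Or.inr (Or.inl (by rw [hx, inv_mul_cancel_left₀ hlam.ne'])))
  · rcases hx.eq_or_lt with hx | hx
    · exact Or.inl (Or.inr (Or.inr (by rw [← hx, inv_mul_cancel₀ hlam.ne', mem_singleton_iff])))
    · exact Or.inr ((lt_inv_mul_iff₀ hlam).2 (by rwa [mul_one]))

theorem IsGap.abs_add {c β : ℝ} (hlam : lam ∈ Ioo 0 1) (hhalf : lam ≤ 1 / 2)
    (hβ : IsGap lam |β|) (hβ' : IsGap lam (1 - lam - |β|)) (hc : |c| ∈ ({0, 1 - lam, 1} : Set ℝ)) :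
    IsGap lam |c + β| := by
  have hβ0 := hβ'.nonneg hlam
  have hcases : |c + β| = |c| + |β| ∨ |c + β| = |(|c| - |β|)| := by
    rcases abs_cases c with ⟨hc, _⟩ | ⟨hc, _⟩ <;> rcases abs_cases β with ⟨hβ, _⟩ | ⟨hβ, _⟩ <;>
      rw [hc, hβ]
    · exact Or.inl (abs_of_nonneg (by linarith))
    · exact Or.inr (by rw [sub_neg_eq_add])
    · exact Or.inr (by rw [← abs_neg]; congr 1; ring)
    · exact Or.inl (by rw [abs_of_nonpos (by linarith), neg_add])
  rcases hcases with h | h <;> rw [h]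
  · refine IsGap.add hlam hhalf ?_ hβ
    rcases hc with hc | hc | hc
    · exact Or.inl hc
    · exact Or.inr (Or.inr (by linarith))
    · exact Or.inr (Or.inr (by rw [hc]; exact hlam.2.le))
  · rcases hc with hc | hc | hc <;> rw [hc]
    · rwa [zero_sub, abs_neg, abs_abs]
    · rwa [abs_of_nonneg hβ0]
    · rw [abs_of_nonneg (by linarith [hlam.1])]
      exact Or.inr (Or.inr (by linarith))

theorem IsFiniteType.of_isGap (hlam : lam ∈ Ioo 0 1) (hhalf : lam ≤ 1 / 2) (b : Fin n → ℝ)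
    (hb : ∀ i j, IsGap lam |b i - b j| ∧ IsGap lam (1 - lam - |b i - b j|)) :
    IsFiniteType lam b := by
  have hC : (abs ⁻¹' ({0, 1 - lam, 1} : Set ℝ)).Finite :=
    (toFinite _).preimage' fun a _ => (toFinite {a, -a}).subset fun _ hx =>
      eq_or_eq_neg_of_abs_eq hx
  refine IsFiniteType.of_core hlam hC (Or.inl abs_zero) (fun i j => ?_) fun c hc i j => ?_
  · exact sub_nonneg.1 ((hb i j).2.nonneg hlam)
  · exact ((hb i j).1.abs_add hlam hhalf (hb i j).2 hc).abs_inv_mul hlam.1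

theorem exists_not_of_ncard_add_two_le {p : ℕ → Prop}
    (hp : {i | i + 1 < n ∧ p i}.ncard + 2 ≤ n) : ∃ i, i + 1 < n ∧ ¬ p i := by
  have hfin : {i | i + 1 < n ∧ p i}.Finite :=
    (finite_Iio n).subset fun i hi => Nat.lt_of_succ_lt hi.1
  have hcard : {i | i + 1 < n ∧ p i}.ncard < (Iio (n - 1)).ncard := by
    rw [ncard_eq_toFinset_card' (Iio _), toFinset_Iio, Nat.card_Iio]
    omega
  obtain ⟨i, hi, hip⟩ := exists_mem_notMem_of_ncard_lt_ncard hcard hfin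
  have hi : i + 1 < n := Nat.add_lt_of_lt_sub hi
  exact ⟨i, hi, fun h => hip ⟨hi, h⟩⟩

theorem IsInClassA.exists_isFiniteType {m : ℕ} {E : Set ℝ} (hE : IsInClassA lam n m E) :
    ∃ b : Fin n → ℝ, IsFiniteType lam b ∧ E = ⋃ i, (fun x => lam • x + b i) '' E := by
  obtain ⟨hlam, -, hmn, b, hb0, hbn, hlt, hoverlap, hcard, -, -, hEeq⟩ := hE
  have hmono : MonotoneOn b (Iio n) :=
    (strictMonoOn_of_lt_add_one ordConnected_Iio fun i _ _ hi => hlt i hi).monotoneOn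
  have hhalf : lam ≤ 1 / 2 := by
    -- Not all pairs of neighbours overlap, and two disjoint intervals must fit into `[0, 1]`.
    obtain ⟨i, hi, hne⟩ := exists_not_of_ncard_add_two_le (hcard ▸ hmn)
    have hstep := le_step_of_volume_overlap_ne (hlt i hi).le (hoverlap i hi) hne
    have hleft : b 0 ≤ b i := hmono (mem_Iio.2 (by omega)) (mem_Iio.2 (by omega)) (Nat.zero_le i)
    have hright : b (i + 1) ≤ b (n - 1) :=
      hmono (mem_Iio.2 hi) (mem_Iio.2 (by omega)) (Nat.le_sub_one_of_lt hi)
    linarith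
  have hgap {i j : ℕ} (hij : i ≤ j) (hj : j < n) : IsGap lam (b j - b i) :=
    .sub_of_step hlam hhalf
      (fun k hk => isGap_of_volume_overlap hlam.1 (hlt k hk).le (hoverlap k hk)) hij hj
  have hpair {i j : ℕ} (hij : i ≤ j) (hj : j < n) :
      IsGap lam |b j - b i| ∧ IsGap lam (1 - lam - |b j - b i|) := by
    have hrest : 1 - lam - (b j - b i) = b (n - 1) - b j + (b i - b 0) := by rw [hbn, hb0]; ring
    rw [abs_of_nonneg ((hgap hij hj).nonneg hlam), hrest]
    exact ⟨hgap hij hj, (hgap (Nat.le_sub_one_of_lt hj) (Nat.sub_lt (by omega) one_pos)).add hlam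
      hhalf (hgap (Nat.zero_le i) (hij.trans_lt hj))⟩
  refine ⟨fun i => b i, IsFiniteType.of_isGap hlam hhalf _ fun i j => ?_, ?_⟩
  · rcases le_total i j with hij | hij
    · rw [abs_sub_comm]
      exact hpair hij j.2
    · exact hpair hij i.2
  · exact hEeq.trans (by ext x; simp [Fin.exists_iff])

end ClassA

/-! ### Similitudes and self-similar sets -/

section Similitude

variable {X Y Z : Type*} [MetricSpace X] [MetricSpace Y] [MetricSpace Z]

/-- A similitude of ratio `c`. The ratio is an argument, and not recovered from the map as by
`Dilation.ratio`, so that it is multiplicative on spaces with a single point as well. -/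
def IsSimilitude (c : ℝ≥0) (h : X → Y) : Prop :=
  ∀ x y, dist (h x) (h y) = c * dist x y

namespace IsSimilitude

variable {c c' : ℝ≥0} {h : X → Y} {h' : Y → Z}

theorem comp (hh' : IsSimilitude c' h') (hh : IsSimilitude c h) : IsSimilitude (c' * c) (h' ∘ h) :=
  fun x y => by rw [Function.comp_apply, Function.comp_apply, hh', hh, NNReal.coe_mul, mul_assoc]

theorem lipschitzWith (hh : IsSimilitude c h) : LipschitzWith c h :=
  LipschitzWith.of_dist_le_mul fun x y => (hh x y).le

theorem antilipschitzWith (hh : IsSimilitude c h) (hc : c ≠ 0) : AntilipschitzWith c⁻¹ h :=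
  AntilipschitzWith.of_le_mul_dist fun x y => by
    rw [hh, NNReal.coe_inv, inv_mul_cancel_left₀ (NNReal.coe_ne_zero.2 hc)]

theorem mul_ediam_preimage_le (hh : IsSimilitude c h) (hc : c ≠ 0) (U : Set Y) :
    c * ediam (h ⁻¹' U) ≤ ediam U := by
  have := (hh.antilipschitzWith hc).ediam_preimage_le U
  rwa [ENNReal.coe_inv hc, ← ENNReal.div_eq_inv_mul, ENNReal.le_div_iff_mul_le
    (Or.inl (ENNReal.coe_ne_zero.2 hc)) (Or.inl ENNReal.coe_ne_top), mul_comm] at this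

theorem hausdorffMeasure_image [MeasurableSpace X] [BorelSpace X] [MeasurableSpace Y]
    [BorelSpace Y] (hh : IsSimilitude c h) (hc : c ≠ 0) (s : ℝ≥0) (A : Set X) :
    μH[s] (h '' A) = (c : ℝ≥0∞) ^ (s : ℝ) * μH[s] A := by
  have hc0 : (c : ℝ≥0∞) ^ (s : ℝ) ≠ 0 := by simpa using fun h => absurd h hc
  have hctop : (c : ℝ≥0∞) ^ (s : ℝ) ≠ ⊤ :=
    ENNReal.rpow_ne_top_of_nonneg s.coe_nonneg ENNReal.coe_ne_top
  refine le_antisymm (hh.lipschitzWith.lipschitzOnWith.hausdorffMeasure_image_le s.coe_nonneg) ?_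
  have := (hh.antilipschitzWith hc).le_hausdorffMeasure_image s.coe_nonneg A
  rwa [ENNReal.coe_inv hc, ENNReal.inv_rpow, ← ENNReal.div_eq_inv_mul,
    ENNReal.le_div_iff_mul_le (Or.inl hc0) (Or.inl hctop), mul_comm] at this

end IsSimilitude

end Similitude

section Cylinder

variable {X : Type*} {t : ℕ} {g : Fin t → X → X} {F : Set X}

/-- The composition `g_{w₁} ∘ ⋯ ∘ g_{w_k}` indexed by a finite word `w`. -/
def wordMap (g : Fin t → X → X) : List (Fin t) → X → X
  | [] => id
  | j :: w => g j ∘ wordMap g w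

theorem cylinder_append (g : Fin t → X → X) (F : Set X) (w v : List (Fin t)) :
    cylinder g F (w ++ v) = wordMap g w '' cylinder g F v := by
  induction w with
  | nil => exact (image_id _).symm
  | cons j w ih =>
    rw [wordMap, image_comp, ← ih]
    rfl

theorem cylinder_eq_image (g : Fin t → X → X) (F : Set X) (w : List (Fin t)) :
    cylinder g F w = wordMap g w '' F := by
  simpa only [List.append_nil, _root_.cylinder] using cylinder_append g F w []

theorem image_subset_of_eq_iUnion (hF : F = ⋃ j, g j '' F) (j : Fin t) : g j '' F ⊆ F := by
  conv_rhs => rw [hF]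
  exact subset_iUnion (fun j => g j '' F) j

theorem cylinder_subset (hF : F = ⋃ j, g j '' F) (w : List (Fin t)) : cylinder g F w ⊆ F := by
  induction w with
  | nil => exact subset_rfl
  | cons j w ih => exact (image_mono ih).trans (image_subset_of_eq_iUnion hF j)

theorem cylinder_append_subset (hF : F = ⋃ j, g j '' F) (w v : List (Fin t)) :
    cylinder g F (w ++ v) ⊆ cylinder g F w := by
  rw [cylinder_append, cylinder_eq_image g F w]
  exact image_mono (cylinder_subset hF v)

theorem cylinder_eq_iUnion_append_singleton (hF : F = ⋃ j, g j '' F) (w : List (Fin t)) :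
    cylinder g F w = ⋃ j, cylinder g F (w ++ [j]) := by
  rw [cylinder_eq_image]
  conv_lhs => rw [hF, image_iUnion]
  exact iUnion_congr fun j => (cylinder_append g F w [j]).symm

theorem pairwise_disjoint_cylinder_append_singleton (hg : ∀ j, Function.Injective (g j))
    (hdisj : Pairwise (Function.onFun Disjoint fun j => g j '' F)) (w : List (Fin t)) :
    Pairwise (Function.onFun Disjoint fun j => cylinder g F (w ++ [j])) := by
  induction w with
  | nil => exact hdisj
  | cons i w ih => exact fun j j' hjj' => (disjoint_image_iff (hg i)).2 (ih hjj')

theorem prefix_or_prefix_or_disjoint_cylinder (hF : F = ⋃ j, g j '' F)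
    (hg : ∀ j, Function.Injective (g j))
    (hdisj : Pairwise (Function.onFun Disjoint fun j => g j '' F)) (u v : List (Fin t)) :
    u <+: v ∨ v <+: u ∨ Disjoint (cylinder g F u) (cylinder g F v) := by
  induction u generalizing v with
  | nil => exact Or.inl List.nil_prefix
  | cons i u ih =>
    rcases v with _ | ⟨j, v⟩
    · exact Or.inr (Or.inl List.nil_prefix)
    · rcases eq_or_ne i j with rfl | hij
      · simp only [List.cons_prefix_cons, true_and]
        exact (ih v).imp_right (Or.imp_right (disjoint_image_iff (hg i)).2)
      · exact Or.inr (Or.inr ((hdisj hij).mono (image_mono (cylinder_subset hF u))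
          (image_mono (cylinder_subset hF v))))

theorem subset_iUnion_cylinder_ofFn (hF : F = ⋃ j, g j '' F) (k : ℕ) :
    F ⊆ ⋃ p : Fin k → Fin t, cylinder g F (List.ofFn p) := by
  induction k with
  | zero => exact subset_iUnion_of_subset Fin.elim0 (by simp [_root_.cylinder])
  | succ k ih =>
    intro x hx
    obtain ⟨j, y, hy, rfl⟩ := mem_iUnion.1 (hF ▸ hx)
    obtain ⟨p, hp⟩ := mem_iUnion.1 (ih hy)
    refine mem_iUnion.2 ⟨Fin.cons j p, ?_⟩
    simpa [List.ofFn_succ, _root_.cylinder] using mem_image_of_mem (g j) hp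

end Cylinder

section Attractor

variable {X : Type*} [MetricSpace X] {t : ℕ} {g : Fin t → X → X} {r : Fin t → ℝ≥0} {F : Set X}

theorem IsSimilitude.wordMap (hg : ∀ j, IsSimilitude (r j) (g j)) (w : List (Fin t)) :
    IsSimilitude (w.map r).prod (wordMap g w) := by
  induction w with
  | nil => exact fun x y => by simp [_root_.wordMap]
  | cons j w ih => simpa [_root_.wordMap] using (hg j).comp ih

/-- `F` is the self-similar set generated by the contracting similitudes `g j` of ratios `r j`. -/
structure IsAttractor (g : Fin t → X → X) (r : Fin t → ℝ≥0) (F : Set X) : Prop where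
  ratio_ne_zero : ∀ j, r j ≠ 0
  ratio_lt_one : ∀ j, r j < 1
  isSimilitude : ∀ j, IsSimilitude (r j) (g j)
  nonempty : F.Nonempty
  isCompact : IsCompact F
  eq_iUnion : F = ⋃ j, g j '' F

/-- A self-similar set satisfying the strong separation condition, together with the similitudes
generating it. -/
structure IsDustLikeAttractor (g : Fin t → X → X) (r : Fin t → ℝ≥0) (F : Set X) : Prop
    extends IsAttractor g r F where
  disjoint : Pairwise (Function.onFun Disjoint fun j => g j '' F)

namespace IsAttractor

variable (hF : IsAttractor g r F)
include hF

theorem wordRatio_ne_zero (w : List (Fin t)) : (w.map r).prod ≠ 0 := by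
  simpa [List.prod_eq_zero_iff] using fun j _ => hF.ratio_ne_zero j

theorem exists_wordRatio_le_pow : ∃ q < 1, ∀ w : List (Fin t), (w.map r).prod ≤ q ^ w.length := by
  refine ⟨Finset.univ.sup r,
    (Finset.sup_lt_iff zero_lt_one).2 fun j _ => hF.ratio_lt_one j, fun w => ?_⟩
  rw [← w.length_map r]
  refine List.prod_le_pow_card _ _ fun c hc => ?_
  obtain ⟨j, -, rfl⟩ := List.mem_map.1 hc
  exact Finset.le_sup (Finset.mem_univ j)

theorem wordRatio_le_one (w : List (Fin t)) : (w.map r).prod ≤ 1 := by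
  obtain ⟨q, hq, hle⟩ := hF.exists_wordRatio_le_pow
  exact (hle w).trans (pow_le_one₀ q.2 hq.le)

theorem isSimilitude_wordMap (w : List (Fin t)) : IsSimilitude (w.map r).prod (wordMap g w) :=
  .wordMap hF.isSimilitude w

theorem injective (j : Fin t) : Function.Injective (g j) :=
  ((hF.isSimilitude j).antilipschitzWith (hF.ratio_ne_zero j)).injective

theorem cylinder_nonempty (w : List (Fin t)) : (cylinder g F w).Nonempty := by
  rw [cylinder_eq_image]
  exact hF.nonempty.image _

theorem isCompact_cylinder (w : List (Fin t)) : IsCompact (cylinder g F w) := by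
  rw [cylinder_eq_image]
  exact hF.isCompact.image (hF.isSimilitude_wordMap w).lipschitzWith.continuous

theorem hausdorffMeasure_cylinder [MeasurableSpace X] [BorelSpace X] (s : ℝ≥0)
    (w : List (Fin t)) :
    μH[s] (cylinder g F w) = ((w.map r).prod : ℝ≥0∞) ^ (s : ℝ) * μH[s] F := by
  rw [cylinder_eq_image, (hF.isSimilitude_wordMap w).hausdorffMeasure_image
    (hF.wordRatio_ne_zero w)]

theorem hausdorffMeasure_cylinder_ne_zero [MeasurableSpace X] [BorelSpace X] {s : ℝ≥0}
    (h : μH[s] F ≠ 0) (w : List (Fin t)) : μH[s] (cylinder g F w) ≠ 0 := by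
  rw [hF.hausdorffMeasure_cylinder]
  have hR : 0 < ((w.map r).prod : ℝ≥0∞) := ENNReal.coe_pos.2 (hF.wordRatio_ne_zero w).bot_lt
  exact mul_ne_zero (ENNReal.rpow_pos hR ENNReal.coe_ne_top).ne' h

theorem finite_range_hausdorffMeasure_cylinder_ratio [MeasurableSpace X] [BorelSpace X]
    {s : ℝ≥0} (h0 : μH[s] F ≠ 0) (htop : μH[s] F ≠ ⊤) :
    (range fun p : List (Fin t) × Fin t =>
      μH[s] (cylinder g F (p.1 ++ [p.2])) / μH[s] (cylinder g F p.1)).Finite := by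
  refine (finite_range fun j => (r j : ℝ≥0∞) ^ (s : ℝ)).subset
    (range_subset_iff.2 fun ⟨w, j⟩ => ⟨j, ?_⟩)
  have hw : μH[s] (cylinder g F w) ≠ 0 := hF.hausdorffMeasure_cylinder_ne_zero h0 w
  have hw' : μH[s] (cylinder g F w) ≠ ⊤ :=
    ne_top_of_le_ne_top htop (measure_mono (cylinder_subset hF.eq_iUnion w))
  have hchild : μH[s] (cylinder g F (w ++ [j])) =
      (r j : ℝ≥0∞) ^ (s : ℝ) * μH[s] (cylinder g F w) := by
    rw [hF.hausdorffMeasure_cylinder, hF.hausdorffMeasure_cylinder, List.map_append,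
      List.prod_append, List.map_singleton, List.prod_singleton, ENNReal.coe_mul,
      ENNReal.mul_rpow_of_nonneg _ _ s.coe_nonneg]
    ring
  dsimp only
  rw [hchild, ENNReal.mul_div_cancel_right hw hw']

theorem dist_le_of_mem_cylinder {w : List (Fin t)} {x y : X} (hx : x ∈ cylinder g F w)
    (hy : y ∈ cylinder g F w) : dist x y ≤ (w.map r).prod * diam F := by
  rw [cylinder_eq_image] at hx hy
  obtain ⟨x, hx, rfl⟩ := hx
  obtain ⟨y, hy, rfl⟩ := hy
  rw [hF.isSimilitude_wordMap w]
  gcongr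
  exact dist_le_diam_of_mem hF.isCompact.isBounded hx hy

end IsAttractor

/-- `A` is a piece of `E` of diameter at most `D`, at distance at least `η` from the rest of `E`. -/
structure IsIsolatedPiece {Y : Type*} [MetricSpace Y] (E A : Set Y) (D η : ℝ) : Prop where
  nonempty : A.Nonempty
  subset : A ⊆ E
  dist_le : ∀ x ∈ A, ∀ y ∈ A, dist x y ≤ D
  le_dist : ∀ x ∈ A, ∀ y ∈ E \ A, η ≤ dist x y

namespace IsIsolatedPiece

variable {Y : Type*} [MetricSpace Y] {E A : Set Y} {D D' η η' : ℝ}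

theorem mono (hA : IsIsolatedPiece E A D η) (hD : D ≤ D') (hη : η' ≤ η) :
    IsIsolatedPiece E A D' η' where
  nonempty := hA.nonempty
  subset := hA.subset
  dist_le x hx y hy := (hA.dist_le x hx y hy).trans hD
  le_dist x hx y hy := hη.trans (hA.le_dist x hx y hy)

theorem image {F A : Set X} {f : X → Y} {K K' : ℝ≥0} (hA : IsIsolatedPiece F A D η)
    (hf : LipschitzOnWith K f F) (hf' : AntilipschitzWith K' (F.domRestrict f)) :
    IsIsolatedPiece (f '' F) (f '' A) (K * D) ((K' : ℝ)⁻¹ * η) where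
  nonempty := hA.nonempty.image f
  subset := image_mono hA.subset
  dist_le := by
    rintro _ ⟨x, hx, rfl⟩ _ ⟨y, hy, rfl⟩
    exact (hf.dist_le_mul x (hA.subset hx) y (hA.subset hy)).trans
      (mul_le_mul_of_nonneg_left (hA.dist_le x hx y hy) K.2)
  le_dist := by
    rintro _ ⟨x, hx, rfl⟩ _ ⟨⟨y, hy, rfl⟩, hyA⟩
    have hxy : η ≤ dist x y := hA.le_dist x hx y ⟨hy, fun h => hyA (mem_image_of_mem f h)⟩
    have hanti : dist x y ≤ K' * dist (f x) (f y) :=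
      hf'.le_mul_dist ⟨x, hA.subset hx⟩ ⟨y, hy⟩
    exact inv_mul_le_of_le_mul₀ K'.2 dist_nonneg (hxy.trans hanti)

end IsIsolatedPiece

namespace IsDustLikeAttractor

variable (hF : IsDustLikeAttractor g r F)
include hF

theorem exists_pos_forall_le_dist : ∃ δ > 0, ∀ i j, i ≠ j → ∀ x ∈ g i '' F, ∀ y ∈ g j '' F,
    δ ≤ dist x y := by
  have hcompact (j : Fin t) : IsCompact (g j '' F) :=
    hF.isCompact.image (hF.isSimilitude j).lipschitzWith.continuous
  have hpair (p : Fin t × Fin t) : p.1 ≠ p.2 → ∃ ρ : ℝ, 0 < ρ ∧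
      ∀ x ∈ g p.1 '' F, ∀ y ∈ g p.2 '' F, ρ ≤ dist x y := fun hp => by
    obtain ⟨ρ, hρ, hdist⟩ :=
      exists_pos_forall_lt_edist (hcompact p.1) (hcompact p.2).isClosed (hF.disjoint hp)
    refine ⟨ρ, hρ, fun x hx y hy => ?_⟩
    have := hdist x hx y hy
    rw [edist_nndist, ENNReal.coe_lt_coe] at this
    exact this.le
  choose! ρ hρ hdist using hpair
  obtain ⟨δ, hδ, hle⟩ :=
    exists_pos_forall_le_of_finite (toFinite {p : Fin t × Fin t | p.1 ≠ p.2}) hρ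
  exact ⟨δ, hδ, fun i j hij x hx y hy =>
    (hle (i, j) hij).trans (hdist (i, j) hij x hx y hy)⟩

theorem exists_isIsolatedPiece_cylinder : ∃ δ > 0, ∀ w : List (Fin t),
    IsIsolatedPiece F (cylinder g F w) ((w.map r).prod * diam F) ((w.map r).prod * δ) := by
  obtain ⟨δ, hδ, hsep⟩ := hF.exists_pos_forall_le_dist
  refine ⟨δ, hδ, fun w => ⟨hF.cylinder_nonempty w, cylinder_subset hF.eq_iUnion w,
    fun x hx y hy => hF.dist_le_of_mem_cylinder hx hy, ?_⟩⟩
  induction w with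
  | nil => exact fun _ _ y hy => absurd hy.1 hy.2
  | cons j w ih =>
    rintro _ ⟨x, hx, rfl⟩ y ⟨hy, hyw⟩
    obtain ⟨i, hyi⟩ := mem_iUnion.1 (hF.eq_iUnion ▸ hy)
    rcases eq_or_ne j i with rfl | hji
    · obtain ⟨y, hyF, rfl⟩ := hyi
      rw [hF.isSimilitude j, List.map_cons, List.prod_cons, NNReal.coe_mul, mul_assoc]
      gcongr
      exact ih x hx y ⟨hyF, fun h => hyw (mem_image_of_mem _ h)⟩
    · have hx : g j x ∈ g j '' F := mem_image_of_mem _ (cylinder_subset hF.eq_iUnion w hx)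
      exact (mul_le_of_le_one_left hδ.le (hF.wordRatio_le_one _)).trans (hsep j i hji _ hx _ hyi)

theorem exists_isIsolatedPiece_cylinder_and_child :
    ∃ δ > 0, ∀ w j,
      IsIsolatedPiece F (cylinder g F w) (diam F * (w.map r).prod) (δ * (w.map r).prod) ∧
      IsIsolatedPiece F (cylinder g F (w ++ [j])) (diam F * (w.map r).prod)
        (δ * (w.map r).prod) := by
  obtain ⟨δ, hδ, hpiece⟩ := hF.exists_isIsolatedPiece_cylinder
  obtain ⟨ε, hε, hεr⟩ := exists_pos_forall_le_of_finite (finite_univ (α := Fin t))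
    (f := fun j => min 1 (r j : ℝ)) fun j _ =>
      lt_min one_pos (NNReal.coe_pos.2 (hF.ratio_ne_zero j).bot_lt)
  have hεj (j : Fin t) : ε ≤ 1 ∧ ε ≤ r j := le_min_iff.1 (hεr j (mem_univ j))
  refine ⟨ε * δ, mul_pos hε hδ, fun w j => ⟨(hpiece w).mono (mul_comm _ _).le ?_,
    (hpiece (w ++ [j])).mono ?_ ?_⟩⟩
  · rw [mul_comm]
    gcongr
    exact mul_le_of_le_one_left hδ.le (hεj j).1
  · rw [List.map_append, List.prod_append, List.map_singleton, List.prod_singleton,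
      NNReal.coe_mul, mul_comm (diam F)]
    gcongr
    exact mul_le_of_le_one_right (NNReal.coe_nonneg _) (hF.ratio_lt_one j).le
  · rw [List.map_append, List.prod_append, List.map_singleton, List.prod_singleton,
      NNReal.coe_mul, mul_comm, mul_assoc]
    gcongr
    exact (hεj j).2

end IsDustLikeAttractor

end Attractor

/-! ### Hausdorff measure and the similarity dimension -/

section FiniteCover

variable {X : Type*} [EMetricSpace X]

theorem exists_isOpen_ediam_rpow_le (A : Set X) {s : ℝ} (hs : 0 < s) {ε : ℝ≥0∞} (hε : ε ≠ 0) :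
    ∃ V, IsOpen V ∧ A ⊆ V ∧ ediam V ^ s ≤ ediam A ^ s + ε := by
  rcases eq_or_ne (ediam A) ⊤ with htop | htop
  · refine ⟨univ, isOpen_univ, subset_univ A, le_top.trans_eq ?_⟩
    rw [htop, ENNReal.top_rpow_of_pos hs, top_add]
  have hlim : Tendsto (fun ρ : ℝ≥0 => (ediam A + 2 * ρ) ^ s) (𝓝[>] 0) (𝓝 (ediam A ^ s)) := by
    have hcont : Continuous fun ρ : ℝ≥0 => (ediam A + 2 * ρ) ^ s :=
      ENNReal.continuous_rpow_const.comp (continuous_const.add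
        ((ENNReal.continuous_const_mul ENNReal.ofNat_ne_top).comp ENNReal.continuous_coe))
    simpa using (hcont.tendsto 0).mono_left nhdsWithin_le_nhds
  have hlt : ediam A ^ s < ediam A ^ s + ε :=
    ENNReal.lt_add_right (ENNReal.rpow_ne_top_of_nonneg hs.le htop) hε
  obtain ⟨ρ, hρlt, hρ⟩ := ((hlim.eventually_lt_const hlt).and eventually_mem_nhdsWithin).exists
  exact ⟨thickening ρ A, isOpen_thickening, self_subset_thickening hρ A,
    (ENNReal.rpow_le_rpow (ediam_thickening_le ρ) hs.le).trans hρlt.le⟩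

theorem iSup_nonempty_ediam_rpow (A : Set X) {s : ℝ} (hs : 0 < s) :
    ⨆ _ : A.Nonempty, ediam A ^ s = ediam A ^ s := by
  rcases A.eq_empty_or_nonempty with rfl | hA
  · simp [hs]
  · exact ciSup_pos hA

theorem le_hausdorffMeasure_of_forall_finite_cover [MeasurableSpace X] [BorelSpace X] {F : Set X}
    (hF : IsCompact F) {s : ℝ} (hs : 0 < s) {c : ℝ≥0∞}
    (h : ∀ (I : Finset ℕ) (U : ℕ → Set X), F ⊆ ⋃ i ∈ I, U i → c ≤ ∑ i ∈ I, ediam (U i) ^ s) :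
    c ≤ μH[s] F := by
  rw [Measure.hausdorffMeasure_apply]
  refine le_iSup₂_of_le 1 zero_lt_one (le_iInf₂ fun A hA => le_iInf fun _ => ?_)
  simp only [iSup_nonempty_ediam_rpow _ hs]
  refine ENNReal.le_of_forall_pos_le_add fun ε hε _ => ?_
  obtain ⟨ε', hε', hsum⟩ := ENNReal.exists_pos_sum_of_countable' (ENNReal.coe_ne_zero.2 hε.ne') ℕ
  choose V hVopen hAV hV using fun n => exists_isOpen_ediam_rpow_le (A n) hs (hε' n).ne'
  obtain ⟨I, hI⟩ := hF.elim_finite_subcover V hVopen (hA.trans (iUnion_mono hAV))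
  calc c ≤ ∑ i ∈ I, ediam (V i) ^ s := h I V hI
    _ ≤ ∑' i, ediam (V i) ^ s := ENNReal.sum_le_tsum I
    _ ≤ ∑' i, (ediam (A i) ^ s + ε' i) := ENNReal.tsum_le_tsum hV
    _ ≤ ∑' i, ediam (A i) ^ s + ε := by
      rw [ENNReal.tsum_add]
      gcongr

end FiniteCover

section Moran

variable {X : Type*} [MetricSpace X] {t : ℕ} {g : Fin t → X → X} {r : Fin t → ℝ≥0} {F : Set X}

namespace IsAttractor

theorem ediam_cylinder_le (hF : IsAttractor g r F) (w : List (Fin t)) :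
    ediam (cylinder g F w) ≤ (w.map r).prod * ediam F := by
  rw [cylinder_eq_image]
  exact (hF.isSimilitude_wordMap w).lipschitzWith.ediam_image_le F

theorem sum_ediam_cylinder_rpow_le (hF : IsAttractor g r F) {s : ℝ≥0}
    (hsum : ∑ j, r j ^ (s : ℝ) ≤ 1) (k : ℕ) :
    ∑ p : Fin k → Fin t, ediam (cylinder g F (List.ofFn p)) ^ (s : ℝ) ≤ ediam F ^ (s : ℝ) :=
  calc ∑ p : Fin k → Fin t, ediam (cylinder g F (List.ofFn p)) ^ (s : ℝ)
      ≤ ∑ p : Fin k → Fin t, ↑(∏ i, r (p i) ^ (s : ℝ)) * ediam F ^ (s : ℝ) := by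
        gcongr with p
        rw [NNReal.finsetProd_rpow, ENNReal.coe_rpow_of_nonneg _ s.coe_nonneg,
          ← ENNReal.mul_rpow_of_nonneg _ _ s.coe_nonneg]
        gcongr
        simpa [List.map_ofFn, List.prod_ofFn] using hF.ediam_cylinder_le (List.ofFn p)
    _ = ↑((∑ j, r j ^ (s : ℝ)) ^ k) * ediam F ^ (s : ℝ) := by
        rw [Fintype.sum_pow, ENNReal.ofNNReal_finsetSum, Finset.sum_mul]
    _ ≤ ediam F ^ (s : ℝ) :=
        mul_le_of_le_one_left zero_le (by exact_mod_cast pow_le_one₀ zero_le hsum)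

theorem hausdorffMeasure_lt_top [MeasurableSpace X] [BorelSpace X] (hF : IsAttractor g r F)
    {s : ℝ≥0} (hsum : ∑ j, r j ^ (s : ℝ) ≤ 1) : μH[s] F < ⊤ := by
  have hdiam : ediam F ≠ ⊤ := hF.isCompact.isBounded.ediam_ne_top
  obtain ⟨q, hq, hle⟩ := hF.exists_wordRatio_le_pow
  have hmesh : Tendsto (fun k : ℕ => (q : ℝ≥0∞) ^ k * ediam F) atTop (𝓝 0) := by
    simpa using ENNReal.Tendsto.mul_const
      (ENNReal.tendsto_pow_atTop_nhds_zero_of_lt_one (ENNReal.coe_lt_one_iff.2 hq)) (Or.inr hdiam)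
  have hfine (k : ℕ) (p : Fin k → Fin t) :
      ediam (cylinder g F (List.ofFn p)) ≤ (q : ℝ≥0∞) ^ k * ediam F := by
    refine (hF.ediam_cylinder_le _).trans ?_
    gcongr
    exact_mod_cast (hle (List.ofFn p)).trans_eq (by rw [List.length_ofFn])
  calc μH[s] F
      ≤ liminf (fun k => ∑ p : Fin k → Fin t,
          ediam (cylinder g F (List.ofFn p)) ^ (s : ℝ)) atTop :=
        Measure.hausdorffMeasure_le_liminf_sum s F _ hmesh _ (Eventually.of_forall hfine)
          (Eventually.of_forall (subset_iUnion_cylinder_ofFn hF.eq_iUnion))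
    _ ≤ liminf (fun _ => ediam F ^ (s : ℝ)) atTop :=
        liminf_le_liminf (Eventually.of_forall (hF.sum_ediam_cylinder_rpow_le hsum))
    _ = ediam F ^ (s : ℝ) := liminf_const _
    _ < ⊤ := ENNReal.rpow_lt_top_of_nonneg s.coe_nonneg hdiam

end IsAttractor

theorem exists_ne_of_one_le_sum {r : Fin t → ℝ≥0} (hr : ∀ j, r j < 1) {s : ℝ} (hs : 0 < s)
    (hsum : 1 ≤ ∑ j, r j ^ s) (j : Fin t) : ∃ i, i ≠ j := by
  by_contra! hall
  rw [Finset.sum_eq_single_of_mem j (Finset.mem_univ j) fun i _ hij => absurd (hall i) hij] at hsum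
  exact (NNReal.rpow_lt_one (hr j) hs).not_ge hsum

theorem IsSimilitude.rpow_mul_sum_ediam_preimage_le {h : X → X} {c : ℝ≥0} (hh : IsSimilitude c h)
    (hc : c ≠ 0) {s : ℝ} (hs : 0 ≤ s) {κ : Type*} (I : Finset κ) (U : κ → Set X) :
    (c : ℝ≥0∞) ^ s * ∑ i ∈ I, ediam (h ⁻¹' U i) ^ s ≤ ∑ i ∈ I, ediam (U i) ^ s := by
  rw [Finset.mul_sum]
  gcongr with i
  rw [← ENNReal.mul_rpow_of_nonneg _ _ hs]
  exact ENNReal.rpow_le_rpow (hh.mul_ediam_preimage_le hc (U i)) hs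

open Classical in
theorem disjoint_filter_inter_nonempty {A B : Set X} {δ : ℝ} (hAB : ∀ x ∈ A, ∀ y ∈ B, δ ≤ dist x y)
    {κ : Type*} {I : Finset κ} {U : κ → Set X} (hU : ∀ i ∈ I, ediam (U i) < ENNReal.ofReal δ) :
    Disjoint {i ∈ I | (U i ∩ A).Nonempty} {i ∈ I | (U i ∩ B).Nonempty} := by
  refine Finset.disjoint_filter.2 fun i hi ⟨x, hxU, hx⟩ ⟨y, hyU, hy⟩ => ?_
  have hlt := (edist_le_ediam_of_mem hxU hyU).trans_lt (hU i hi)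
  rw [edist_lt_ofReal] at hlt
  exact hlt.not_ge (hAB x hx y hy)

namespace IsDustLikeAttractor

-- A cover by sets of diameter less than `δ` splits into covers of the pieces `g j '' F`, and
-- pulling these back by `g j` yields covers of `F` by fewer sets.
theorem rpow_le_sum_ediam_of_cover (hF : IsDustLikeAttractor g r F) {s : ℝ} (hs : 0 < s)
    (hsum : 1 ≤ ∑ j, r j ^ s) {δ : ℝ}
    (hδ : ∀ i j, i ≠ j → ∀ x ∈ g i '' F, ∀ y ∈ g j '' F, δ ≤ dist x y) {κ : Type*} (I : Finset κ)
    (U : κ → Set X) (hcover : F ⊆ ⋃ i ∈ I, U i) :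
    ENNReal.ofReal δ ^ s ≤ ∑ i ∈ I, ediam (U i) ^ s := by
  classical
  induction I using Finset.strongInduction generalizing U with
  | H I ih =>
  by_cases! hlarge : ∃ i ∈ I, ENNReal.ofReal δ ≤ ediam (U i)
  · obtain ⟨i, hi, hδi⟩ := hlarge
    exact (ENNReal.rpow_le_rpow hδi hs.le).trans
      (Finset.single_le_sum_of_canonicallyOrdered (f := fun i => ediam (U i) ^ s) hi)
  let J (j : Fin t) : Finset κ := {i ∈ I | (U i ∩ g j '' F).Nonempty}
  have hJdisj (j j' : Fin t) (hjj' : j ≠ j') : Disjoint (J j) (J j') :=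
    disjoint_filter_inter_nonempty (hδ j j' hjj') hlarge
  have hJcover (j : Fin t) : F ⊆ ⋃ i ∈ J j, g j ⁻¹' U i := fun x hx => by
    have hgx := mem_image_of_mem (g j) hx
    obtain ⟨i, hi, hxi⟩ := mem_iUnion₂.1 (hcover (image_subset_of_eq_iUnion hF.eq_iUnion j hgx))
    exact mem_biUnion (Finset.mem_filter.2 ⟨hi, g j x, hxi, hgx⟩) hxi
  have hJssub (j : Fin t) : J j ⊂ I := by
    refine (Finset.filter_subset _ I).ssubset_of_ne fun hJI => ?_
    obtain ⟨j', hj'⟩ := exists_ne_of_one_le_sum hF.ratio_lt_one hs hsum j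
    obtain ⟨x, hx⟩ := hF.nonempty
    obtain ⟨i, hi, -⟩ := mem_iUnion₂.1 (hJcover j' hx)
    have hij : i ∈ J j := by
      rw [show J j = I from hJI]
      exact Finset.mem_of_mem_filter i hi
    exact Finset.disjoint_left.1 (hJdisj j' j hj') hi hij
  have hpiece (j : Fin t) :
      (r j : ℝ≥0∞) ^ s * ENNReal.ofReal δ ^ s ≤ ∑ i ∈ J j, ediam (U i) ^ s := by
    refine le_trans ?_ ((hF.isSimilitude j).rpow_mul_sum_ediam_preimage_le (hF.ratio_ne_zero j)
      hs.le (J j) U)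
    gcongr
    exact ih (J j) (hJssub j) _ (hJcover j)
  calc ENNReal.ofReal δ ^ s ≤ ↑(∑ j, r j ^ s) * ENNReal.ofReal δ ^ s :=
        le_mul_of_one_le_left zero_le (by exact_mod_cast hsum)
    _ ≤ ∑ j, ∑ i ∈ J j, ediam (U i) ^ s := by
        rw [ENNReal.ofNNReal_finsetSum, Finset.sum_mul]
        gcongr with j
        rw [ENNReal.coe_rpow_of_nonneg _ hs.le]
        exact hpiece j
    _ = ∑ i ∈ Finset.univ.biUnion J, ediam (U i) ^ s :=
        (Finset.sum_biUnion fun j _ j' _ hjj' => hJdisj j j' hjj').symm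
    _ ≤ ∑ i ∈ I, ediam (U i) ^ s :=
        Finset.sum_le_sum_of_subset (Finset.biUnion_subset.2 fun j _ => Finset.filter_subset _ I)

theorem hausdorffMeasure_ne_zero [MeasurableSpace X] [BorelSpace X]
    (hF : IsDustLikeAttractor g r F) {s : ℝ} (hs : 0 < s) (hsum : 1 ≤ ∑ j, r j ^ s) :
    μH[s] F ≠ 0 := by
  obtain ⟨δ, hδ, hsep⟩ := hF.exists_pos_forall_le_dist
  have hle := le_hausdorffMeasure_of_forall_finite_cover hF.isCompact hs
    fun I U => hF.rpow_le_sum_ediam_of_cover hs hsum hsep I U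
  refine (lt_of_lt_of_le ?_ hle).ne'
  exact ENNReal.rpow_pos (ENNReal.ofReal_pos.2 hδ) ENNReal.ofReal_ne_top

theorem sum_rpow_le_one_of_dimH_eq (hF : IsDustLikeAttractor g r F) {s : ℝ≥0}
    (hs : dimH F = s) : ∑ j, r j ^ (s : ℝ) ≤ 1 := by
  borelize X
  by_contra! hlt
  have hcont : Continuous fun x : ℝ≥0 => ∑ j, r j ^ (x : ℝ) :=
    continuous_finsetSum _ fun j _ => continuous_iff_continuousAt.2 fun x =>
      tendsto_const_nhds.nnrpow NNReal.continuous_coe.continuousAt (Or.inl (hF.ratio_ne_zero j))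
  have hnear : ∀ᶠ x : ℝ≥0 in 𝓝[>] s, 1 < ∑ j, r j ^ (x : ℝ) :=
    (hcont.tendsto s).eventually_const_lt hlt |>.filter_mono nhdsWithin_le_nhds
  obtain ⟨x, hx, hsx⟩ := (hnear.and eventually_mem_nhdsWithin).exists
  have := le_dimH_of_hausdorffMeasure_ne_zero
    (hF.hausdorffMeasure_ne_zero (NNReal.coe_pos.2 (zero_le.trans_lt hsx)) hx.le)
  rw [hs, ENNReal.coe_le_coe] at this
  exact this.not_gt hsx

end IsDustLikeAttractor

end Moran

/-! ### Isolated pieces of a self-similar set of finite type -/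

section Pieces

open scoped Pointwise

variable {ι V : Type*} [NormedAddCommGroup V] [NormedSpace ℝ V] {lam : ℝ} {b : ι → V} {E A : Set V}
  {Q L η : ℝ} {k : ℕ}

-- A piece whose gap exceeds the size of a level-`k` copy of `E` is a union of such copies.
theorem IsIsolatedPiece.image_offset_subset (hE : E = ⋃ i, (fun x => lam • x + b i) '' E)
    (hlam : 0 < lam) (hQ : ∀ x ∈ E, ∀ y ∈ E, dist x y < Q)
    (hA : IsIsolatedPiece E A (L * lam ^ k) (Q * lam ^ k)) {o : V} (ho : o ∈ offsets lam b k)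
    {x : V} (hx : x ∈ E) (hxA : lam ^ k • x + o ∈ A) :
    (fun y => lam ^ k • y + o) '' E ⊆ A := by
  rintro _ ⟨y, hy, rfl⟩
  by_contra hyA
  have hyE : lam ^ k • y + o ∈ E := by
    rw [eq_iUnion_offsets hE k]
    exact mem_biUnion ho (mem_image_of_mem _ hy)
  have hle := hA.le_dist _ hxA _ ⟨hyE, hyA⟩
  rw [dist_add_right, dist_smul₀, Real.norm_of_nonneg (pow_pos hlam k).le, mul_comm] at hle
  exact (hQ x hx y hy).not_ge (le_of_mul_le_mul_left hle (pow_pos hlam k))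

theorem IsIsolatedPiece.exists_eq_image_add (hE : E = ⋃ i, (fun x => lam • x + b i) '' E)
    (hlam : 0 < lam) (hQ : ∀ x ∈ E, ∀ y ∈ E, dist x y < Q)
    (hA : IsIsolatedPiece E A (L * lam ^ k) (Q * lam ^ k)) :
    ∃ S ⊆ (⋃ k, relativeOffsets lam b k) ∩ closedBall 0 (L + Q), ∃ o : V,
      A = (fun z => lam ^ k • z + o) '' (S + E) := by
  have hk : 0 < lam ^ k := pow_pos hlam k
  have hcopy {y : V} (hy : y ∈ A) : ∃ o ∈ offsets lam b k, ∃ x ∈ E, lam ^ k • x + o = y := by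
    have := hA.subset hy
    rw [eq_iUnion_offsets hE k] at this
    simpa only [mem_iUnion, mem_image, exists_prop] using this
  obtain ⟨a, ha⟩ := hA.nonempty
  obtain ⟨o₀, ho₀, x₀, hx₀, hax⟩ := hcopy ha
  have hshift (o x : V) : lam ^ k • ((lam ^ k)⁻¹ • (o - o₀) + x) + o₀ = lam ^ k • x + o := by
    rw [smul_add, smul_inv_smul₀ hk.ne']
    abel
  refine ⟨{v | ∃ o ∈ offsets lam b k, v = (lam ^ k)⁻¹ • (o - o₀) ∧
    ∃ x ∈ E, lam ^ k • x + o ∈ A}, ?_, o₀, Subset.antisymm ?_ ?_⟩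
  · rintro _ ⟨o, ho, rfl, x, hx, hxA⟩
    refine ⟨mem_iUnion.2 ⟨k, mem_image2_of_mem ho ho₀⟩, mem_closedBall_zero_iff.2 ?_⟩
    rw [norm_smul, norm_inv, Real.norm_of_nonneg hk.le, inv_mul_le_iff₀ hk]
    calc ‖o - o₀‖ = ‖lam ^ k • x + o - a + lam ^ k • (x₀ - x)‖ := by
          rw [← hax, smul_sub]
          congr 1
          abel
      _ ≤ dist (lam ^ k • x + o) a + lam ^ k * dist x₀ x := by
          rw [dist_eq_norm, dist_eq_norm x₀ x, ← Real.norm_of_nonneg hk.le, ← norm_smul,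
            Real.norm_of_nonneg hk.le]
          exact norm_add_le _ _
      _ ≤ L * lam ^ k + lam ^ k * Q := by
          gcongr
          exacts [hA.dist_le _ hxA _ ha, (hQ x₀ hx₀ x hx).le]
      _ = lam ^ k * (L + Q) := by ring
  · intro y hy
    obtain ⟨o, ho, x, hx, rfl⟩ := hcopy hy
    exact ⟨_, add_mem_add ⟨o, ho, rfl, x, hx, hy⟩ hx, hshift o x⟩
  · rintro _ ⟨_, ⟨_, ⟨o, ho, rfl, x', hx', hxA⟩, x, hx, rfl⟩, rfl⟩
    have := hA.image_offset_subset hE hlam hQ ho hx' hxA (mem_image_of_mem _ hx)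
    rwa [← hshift] at this

variable [MeasurableSpace V] [BorelSpace V]

theorem IsFiniteType.exists_finite_hausdorffMeasure_level (hb : IsFiniteType lam b)
    (hE : E = ⋃ i, (fun x => lam • x + b i) '' E) (hlam : 0 < lam)
    (hQ : ∀ x ∈ E, ∀ y ∈ E, dist x y < Q) (L : ℝ) (s : ℝ≥0) :
    ∃ Θ : Set ℝ≥0∞, Θ.Finite ∧ ∀ k A, IsIsolatedPiece E A (L * lam ^ k) (Q * lam ^ k) →
      ∃ θ ∈ Θ, μH[s] A = ENNReal.ofReal (lam ^ k) ^ (s : ℝ) * θ := by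
  refine ⟨(fun S => μH[s] (S + E)) '' _, (hb (L + Q)).finite_subsets.image _, fun k A hA => ?_⟩
  obtain ⟨S, hS, o, rfl⟩ := hA.exists_eq_image_add hE hlam hQ
  have hsim : IsSimilitude (lam ^ k).toNNReal fun z : V => lam ^ k • z + o := fun x y => by
    rw [dist_add_right, dist_smul₀, Real.norm_of_nonneg (pow_pos hlam k).le,
      Real.coe_toNNReal _ (pow_pos hlam k).le]
  exact ⟨_, mem_image_of_mem _ hS,
    hsim.hausdorffMeasure_image (Real.toNNReal_pos.2 (pow_pos hlam k)).ne' s (S + E)⟩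

-- Interpolating between the levels costs a factor `lam` in the diameter bound.
theorem IsFiniteType.exists_finite_hausdorffMeasure_scale (hb : IsFiniteType lam b)
    (hE : E = ⋃ i, (fun x => lam • x + b i) '' E) (hlam : lam ∈ Ioo 0 1)
    (hbdd : Bornology.IsBounded E) (hL : 0 ≤ L) (hη : 0 < η) (s : ℝ≥0) :
    ∃ Θ : Set ℝ≥0∞, Θ.Finite ∧ ∀ ρ ∈ Ioc (0 : ℝ) 1, ∃ a : ℝ≥0∞, a ≠ 0 ∧ a ≠ ⊤ ∧
      ∀ A, IsIsolatedPiece E A (L * ρ) (η * ρ) → ∃ θ ∈ Θ, μH[s] A = a * θ := by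
  obtain ⟨Q, hQpos, hQ⟩ : ∃ Q > 0, ∀ x ∈ E, ∀ y ∈ E, dist x y < Q :=
    ⟨diam E + 1, by positivity, fun x hx y hy =>
      (dist_le_diam_of_mem hbdd hx hy).trans_lt (lt_add_one _)⟩
  let κ := min 1 (η / Q)
  have hκ : 0 < κ := lt_min one_pos (div_pos hη hQpos)
  obtain ⟨Θ, hΘ, hlevel⟩ := hb.exists_finite_hausdorffMeasure_level hE hlam.1 hQ (L / (lam * κ)) s
  refine ⟨Θ, hΘ, fun ρ hρ => ?_⟩
  obtain ⟨k, hk, hk'⟩ := exists_nat_pow_near_of_lt_one (mul_pos hκ hρ.1)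
    (mul_le_one₀ (min_le_left _ _) hρ.1.le hρ.2) hlam.1 hlam.2
  have ha : 0 < ENNReal.ofReal (lam ^ (k + 1)) := ENNReal.ofReal_pos.2 (pow_pos hlam.1 _)
  refine ⟨ENNReal.ofReal (lam ^ (k + 1)) ^ (s : ℝ), (ENNReal.rpow_pos ha ENNReal.ofReal_ne_top).ne',
    ENNReal.rpow_ne_top_of_nonneg s.coe_nonneg ENNReal.ofReal_ne_top, fun A hA =>
      hlevel (k + 1) A (hA.mono ?_ ?_)⟩
  · have hρk : lam * κ * ρ ≤ lam ^ (k + 1) := by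
      rw [mul_assoc, pow_succ']
      exact mul_le_mul_of_nonneg_left hk' hlam.1.le
    calc L * ρ = L / (lam * κ) * (lam * κ * ρ) := by
          rw [← mul_assoc, div_mul_cancel₀ L (mul_pos hlam.1 hκ).ne']
      _ ≤ L / (lam * κ) * lam ^ (k + 1) := by
          have := hlam.1
          gcongr
  · calc Q * lam ^ (k + 1) ≤ Q * (η / Q * ρ) := by
          have := hρ.1
          gcongr
          exact hk.le.trans (by gcongr; exact min_le_right _ _)
      _ = η * ρ := by field_simp

end Pieces

/-! ### Measures with constant density on a cylinder -/

section ConstantDensity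

variable {X : Type*} [MetricSpace X] {t : ℕ} {g : Fin t → X → X} {r : Fin t → ℝ≥0} {F : Set X}

theorem exists_one_lt_forall_le_one_or_le {T : Set ℝ} (hT : T.Finite) :
    ∃ q > 1, ∀ x ∈ T, x ≤ 1 ∨ q ≤ x := by
  obtain ⟨ε, hε, hle⟩ := exists_pos_forall_le_of_finite (hT.inter_of_left (Ioi 1))
    (f := fun x => x - 1) fun x hx => sub_pos.2 hx.2
  exact ⟨1 + ε, lt_add_of_pos_right 1 hε, fun x hx =>
    (le_or_gt x 1).imp_right fun h1 => le_sub_iff_add_le'.1 (hle x ⟨hx, h1⟩)⟩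

-- Each `D w` is a weighted average of the ratios `D (w ++ [j])` of its children. Below a `w` whose
-- ratio is close enough to the supremum no ratio can jump up, so none can go down either.
theorem exists_forall_append_div_eq {ι : Type*} [Fintype ι] {a c : List ι → ℝ}
    (ha : ∀ w, 0 < a w) (hc : ∀ w, 0 < c w) (ha' : ∀ w, a w = ∑ j, a (w ++ [j]))
    (hc' : ∀ w, c w = ∑ j, c (w ++ [j])) (hbdd : BddAbove (range fun w => a w / c w))
    (hfin : (range fun p : List ι × ι =>
      a (p.1 ++ [p.2]) / c (p.1 ++ [p.2]) / (a p.1 / c p.1)).Finite) :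
    ∃ w, ∀ v, a (w ++ v) / c (w ++ v) = a w / c w := by
  set D : List ι → ℝ := fun w => a w / c w
  have hD (w : List ι) : 0 < D w := div_pos (ha w) (hc w)
  have hDc (w : List ι) : D w * c w = a w := div_mul_cancel₀ (a w) (hc w).ne'
  obtain ⟨q, hq, hjump⟩ := exists_one_lt_forall_le_one_or_le hfin
  obtain ⟨_, ⟨w, rfl⟩, hw⟩ := exists_lt_of_lt_csSup (range_nonempty D)
    (div_lt_self ((hD []).trans_le (le_csSup hbdd (mem_range_self []))) hq)
  have hchild_le (u : List ι) (hu : D u = D w) (j : ι) : D (u ++ [j]) ≤ D u := by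
    refine (div_le_one (hD u)).1 ((hjump _ ⟨(u, j), rfl⟩).resolve_right fun hle => ?_)
    have hsup : D (u ++ [j]) < D u * q :=
      (le_csSup hbdd (mem_range_self _)).trans_lt
        (hu ▸ (div_lt_iff₀ (zero_lt_one.trans hq)).1 hw)
    exact hsup.not_ge ((le_div_iff₀' (hD u)).1 hle)
  have hchild_eq (u : List ι) (hu : D u = D w) (j : ι) : D (u ++ [j]) = D u := by
    have hle (i : ι) (_ : i ∈ Finset.univ) :
        D (u ++ [i]) * c (u ++ [i]) ≤ D u * c (u ++ [i]) :=
      mul_le_mul_of_nonneg_right (hchild_le u hu i) (hc _).le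
    have hsum : ∑ i, D (u ++ [i]) * c (u ++ [i]) = ∑ i, D u * c (u ++ [i]) := by
      rw [← Finset.mul_sum, ← hc', hDc, ha']
      exact Finset.sum_congr rfl fun i _ => hDc _
    exact mul_right_cancel₀ (hc _).ne'
      ((Finset.sum_eq_sum_iff_of_le hle).1 hsum j (Finset.mem_univ j))
  refine ⟨w, fun v => ?_⟩
  change D (w ++ v) = D w
  induction v using List.reverseRecOn with
  | nil => rw [List.append_nil]
  | append_singleton v j ih => rw [← List.append_assoc, hchild_eq _ ih, ih]

namespace IsDustLikeAttractor

theorem isTopologicalBasis_cylinder (hF : IsDustLikeAttractor g r F) :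
    TopologicalSpace.IsTopologicalBasis (range fun w => ((↑) : F → X) ⁻¹' cylinder g F w) := by
  obtain ⟨δ, hδ, hpiece⟩ := hF.exists_isIsolatedPiece_cylinder
  refine TopologicalSpace.isTopologicalBasis_of_isOpen_of_nhds ?_ fun x U hxU hU => ?_
  · rintro _ ⟨w, rfl⟩
    have hR : 0 < ((w.map r).prod : ℝ) := NNReal.coe_pos.2 (hF.wordRatio_ne_zero w).bot_lt
    refine Metric.isOpen_iff.2 fun x hx => ⟨_, mul_pos hR hδ, fun y hy => ?_⟩
    by_contra hyw
    exact (mem_ball'.1 hy).not_ge ((hpiece w).le_dist x hx y ⟨y.2, hyw⟩)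
  · obtain ⟨ε, hε, hball⟩ := Metric.isOpen_iff.1 hU x hxU
    obtain ⟨q, hq, hle⟩ := hF.exists_wordRatio_le_pow
    have hmesh : Tendsto (fun k : ℕ => (q : ℝ) ^ k * diam F) atTop (𝓝 0) := by
      simpa using (tendsto_pow_atTop_nhds_zero_of_lt_one q.coe_nonneg hq).mul_const (diam F)
    obtain ⟨k, hk⟩ := (hmesh.eventually_lt_const hε).exists
    obtain ⟨p, hp⟩ := mem_iUnion.1 (subset_iUnion_cylinder_ofFn hF.eq_iUnion k x.2)
    refine ⟨_, mem_range_self (List.ofFn p), hp, fun y hy => hball ?_⟩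
    calc dist y x ≤ ((List.ofFn p).map r).prod * diam F := hF.dist_le_of_mem_cylinder hy hp
      _ ≤ q ^ k * diam F := by
        gcongr
        exact_mod_cast (hle (List.ofFn p)).trans_eq (by rw [List.length_ofFn])
      _ < ε := hk

theorem isPiSystem_cylinder (hF : IsDustLikeAttractor g r F) :
    IsPiSystem (range fun w => ((↑) : F → X) ⁻¹' cylinder g F w) := by
  rintro _ ⟨u, rfl⟩ _ ⟨v, rfl⟩ hne
  rcases prefix_or_prefix_or_disjoint_cylinder hF.eq_iUnion hF.injective hF.disjoint u v with
    ⟨u', rfl⟩ | ⟨v', rfl⟩ | hdisj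
  · exact ⟨u ++ u', (inter_eq_right.2
      (preimage_mono (cylinder_append_subset hF.eq_iUnion u u'))).symm⟩
  · exact ⟨v ++ v', (inter_eq_left.2
      (preimage_mono (cylinder_append_subset hF.eq_iUnion v v'))).symm⟩
  · exact absurd (hdisj.preimage _) (not_disjoint_iff_nonempty_inter.2 hne)

variable [MeasurableSpace X] [BorelSpace X] {μ ν : Measure X}

theorem measurableSet_cylinder (hF : IsDustLikeAttractor g r F) (w : List (Fin t)) :
    MeasurableSet (cylinder g F w) :=
  (hF.isCompact_cylinder w).measurableSet

theorem measure_eq_of_forall_cylinder (hF : IsDustLikeAttractor g r F) [IsFiniteMeasure μ]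
    (h : ∀ w, μ (cylinder g F w) = ν (cylinder g F w)) {B : Set X} (hB : B ⊆ F) :
    μ B = ν B := by
  have : CompactSpace F := isCompact_iff_compactSpace.1 hF.isCompact
  have hval : MeasurableEmbedding ((↑) : F → X) :=
    .subtype_coe (hF.measurableSet_cylinder [])
  have hcomap (κ : Measure X) {A : Set X} (hA : A ⊆ F) :
      κ.comap ((↑) : F → X) ((↑) ⁻¹' A) = κ A := by
    rw [hval.comap_preimage, Subtype.range_coe, inter_eq_left.2 hA]
  have hcyl (w : List (Fin t)) : μ.comap ((↑) : F → X) ((↑) ⁻¹' cylinder g F w) =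
      ν.comap ((↑) : F → X) ((↑) ⁻¹' cylinder g F w) := by
    rw [hcomap μ (cylinder_subset hF.eq_iUnion w), hcomap ν (cylinder_subset hF.eq_iUnion w), h w]
  have heq : μ.comap ((↑) : F → X) = ν.comap (↑) := by
    refine ext_of_generate_finite _ ?_ hF.isPiSystem_cylinder (forall_mem_range.2 hcyl) ?_
    · rw [← hF.isTopologicalBasis_cylinder.borel_eq_generateFrom]
      exact BorelSpace.measurable_eq
    · simpa [_root_.cylinder] using hcyl []
  rw [← hcomap μ hB, heq, hcomap ν hB]

theorem measure_eq_of_forall_cylinder_append (hF : IsDustLikeAttractor g r F) {w : List (Fin t)}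
    (hw : μ (cylinder g F w) ≠ ⊤)
    (h : ∀ v, μ (cylinder g F (w ++ v)) = ν (cylinder g F (w ++ v))) {B : Set X}
    (hB : B ⊆ cylinder g F w) : μ B = ν B := by
  have : IsFiniteMeasure (μ.restrict (cylinder g F w)) := isFiniteMeasure_restrict.2 hw
  rw [← Measure.restrict_eq_self μ hB, ← Measure.restrict_eq_self ν hB]
  refine hF.measure_eq_of_forall_cylinder (fun u => ?_)
    (hB.trans (cylinder_subset hF.eq_iUnion w))
  rw [Measure.restrict_apply (hF.measurableSet_cylinder u),
    Measure.restrict_apply (hF.measurableSet_cylinder u)]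
  rcases prefix_or_prefix_or_disjoint_cylinder hF.eq_iUnion hF.injective hF.disjoint w u with
    ⟨v, rfl⟩ | ⟨v, rfl⟩ | hdisj
  · rw [inter_eq_left.2 (cylinder_append_subset hF.eq_iUnion w v), h]
  · rw [inter_eq_right.2 (cylinder_append_subset hF.eq_iUnion u v)]
    simpa only [List.append_nil] using h []
  · rw [hdisj.symm.inter_eq, measure_empty, measure_empty]

theorem measureReal_cylinder_eq_sum (hF : IsDustLikeAttractor g r F)
    (hμ : ∀ w, μ (cylinder g F w) ≠ ⊤) (w : List (Fin t)) :
    μ.real (cylinder g F w) = ∑ j, μ.real (cylinder g F (w ++ [j])) := by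
  rw [cylinder_eq_iUnion_append_singleton hF.eq_iUnion]
  exact measureReal_iUnion_fintype
    (pairwise_disjoint_cylinder_append_singleton hF.injective hF.disjoint w)
    (fun j => hF.measurableSet_cylinder _) fun j => hμ _

theorem exists_cylinder_measure_eq_mul (hF : IsDustLikeAttractor g r F)
    (hμ0 : ∀ w, μ (cylinder g F w) ≠ 0) (hμ : ∀ w, μ (cylinder g F w) ≠ ⊤)
    (hν0 : ∀ w, ν (cylinder g F w) ≠ 0) {C : ℝ≥0}
    (hle : ∀ w, ν (cylinder g F w) ≤ C * μ (cylinder g F w))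
    (hμfin : (range fun p : List (Fin t) × Fin t =>
      μ (cylinder g F (p.1 ++ [p.2])) / μ (cylinder g F p.1)).Finite)
    (hνfin : (range fun p : List (Fin t) × Fin t =>
      ν (cylinder g F (p.1 ++ [p.2])) / ν (cylinder g F p.1)).Finite) :
    ∃ w, ∃ D : ℝ, 0 < D ∧ ∀ B ⊆ cylinder g F w, ν B = ENNReal.ofReal D * μ B := by
  have hν (w : List (Fin t)) : ν (cylinder g F w) ≠ ⊤ :=
    ne_top_of_le_ne_top (ENNReal.mul_ne_top ENNReal.coe_ne_top (hμ w)) (hle w)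
  have hμpos (w : List (Fin t)) : 0 < μ.real (cylinder g F w) :=
    ENNReal.toReal_pos (hμ0 w) (hμ w)
  have hνpos (w : List (Fin t)) : 0 < ν.real (cylinder g F w) :=
    ENNReal.toReal_pos (hν0 w) (hν w)
  have hbdd : BddAbove (range fun w => ν.real (cylinder g F w) / μ.real (cylinder g F w)) := by
    refine ⟨C, forall_mem_range.2 fun w => (div_le_iff₀ (hμpos w)).2 ?_⟩
    simpa [Measure.real] using
      ENNReal.toReal_mono (ENNReal.mul_ne_top ENNReal.coe_ne_top (hμ w)) (hle w)
  have hfin : (range fun p : List (Fin t) × Fin t =>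
      ν.real (cylinder g F (p.1 ++ [p.2])) / μ.real (cylinder g F (p.1 ++ [p.2])) /
        (ν.real (cylinder g F p.1) / μ.real (cylinder g F p.1))).Finite := by
    refine ((hνfin.image2 (· / ·) hμfin).image ENNReal.toReal).subset
      (range_subset_iff.2 fun p => ⟨_, mem_image2_of_mem (mem_range_self p) (mem_range_self p), ?_⟩)
    simp only [ENNReal.toReal_div, Measure.real, div_div_div_comm]
  obtain ⟨w, hw⟩ := exists_forall_append_div_eq hνpos hμpos (hF.measureReal_cylinder_eq_sum hν)
    (hF.measureReal_cylinder_eq_sum hμ) hbdd hfin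
  refine ⟨w, _, div_pos (hνpos w) (hμpos w), fun B hB =>
    hF.measure_eq_of_forall_cylinder_append (ν := ENNReal.ofReal _ • μ) (hν w) (fun v => ?_) hB⟩
  rw [Measure.smul_apply, smul_eq_mul, ← hw v, ← ofReal_measureReal (hν _),
    ← ofReal_measureReal (hμ (w ++ v)), ← ENNReal.ofReal_mul (div_pos (hνpos _) (hμpos _)).le,
    div_mul_cancel₀ _ (hμpos _).ne']

end IsDustLikeAttractor

end ConstantDensity

/-! ### Bi-Lipschitz images of finite type -/

section BiLipschitzImage

theorem exists_measure_eq_image {X Y : Type*} [TopologicalSpace X] [T2Space X] [MeasurableSpace X]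
    [BorelSpace X] [TopologicalSpace Y] [T2Space Y] [MeasurableSpace Y] [BorelSpace Y] {F : Set X}
    (hF : IsCompact F) {f : X → Y} (hf : ContinuousOn f F) (hinj : InjOn f F) (μ : Measure Y) :
    ∃ ν : Measure X, ∀ B ⊆ F, ν B = μ (f '' B) := by
  have : CompactSpace F := isCompact_iff_compactSpace.1 hF
  have hemb : MeasurableEmbedding (F.domRestrict f) :=
    (hf.domRestrict.isClosedEmbedding hinj.injective).measurableEmbedding
  refine ⟨(μ.comap (F.domRestrict f)).map (↑), fun B hB => ?_⟩
  rw [(MeasurableEmbedding.subtype_coe hF.measurableSet).map_apply, hemb.comap_apply,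
    domRestrict_eq, image_comp, Subtype.image_preimage_coe, inter_eq_right.2 hB]

variable {X Y : Type*} [MetricSpace X] [MeasurableSpace X] [BorelSpace X] [MetricSpace Y]
  [MeasurableSpace Y] [BorelSpace Y] {F : Set X} {f : X → Y} {K : ℝ≥0}

theorem hausdorffMeasure_le_mul_image_of_antilipschitzWith
    (hf : AntilipschitzWith K (F.domRestrict f)) (s : ℝ≥0) {A : Set X} (hA : A ⊆ F) :
    μH[s] A ≤ (K : ℝ≥0∞) ^ (s : ℝ) * μH[s] (f '' A) := by
  have h := hf.le_hausdorffMeasure_image s.coe_nonneg (((↑) : F → X) ⁻¹' A)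
  rwa [domRestrict_eq, image_comp, Subtype.image_preimage_coe, inter_eq_right.2 hA,
    ← isometry_subtype_coe.hausdorffMeasure_image (Or.inl s.coe_nonneg),
    Subtype.image_preimage_coe, inter_eq_right.2 hA] at h

end BiLipschitzImage

section Main

variable {X : Type*} [MetricSpace X] {t : ℕ} {g : Fin t → X → X} {r : Fin t → ℝ≥0} {F : Set X}
  {ι V : Type*} [NormedAddCommGroup V] [NormedSpace ℝ V] [MeasurableSpace V] [BorelSpace V]
  {lam : ℝ} {b : ι → V} {f : X → V} {K K' : ℝ≥0}

theorem IsDustLikeAttractor.finite_range_hausdorffMeasure_image_ratio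
    (hF : IsDustLikeAttractor g r F) (hlam : lam ∈ Ioo 0 1) (hb : IsFiniteType lam b)
    (hE : f '' F = ⋃ i, (fun x => lam • x + b i) '' (f '' F)) (hf : LipschitzOnWith K f F)
    (hf' : AntilipschitzWith K' (F.domRestrict f)) (s : ℝ≥0) :
    (range fun p : List (Fin t) × Fin t =>
      μH[s] (f '' cylinder g F (p.1 ++ [p.2])) / μH[s] (f '' cylinder g F p.1)).Finite := by
  replace hf' : AntilipschitzWith (K' + 1) (F.domRestrict f) := fun x y =>
    (hf' x y).trans (by gcongr; exact le_self_add)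
  obtain ⟨δ, hδ, hpiece⟩ := hF.exists_isIsolatedPiece_cylinder_and_child
  have hη : 0 < ((K' + 1 : ℝ≥0) : ℝ)⁻¹ * δ := mul_pos (inv_pos.2 (by positivity)) hδ
  obtain ⟨Θ, hΘ, hscale⟩ := hb.exists_finite_hausdorffMeasure_scale hE hlam
    (hF.isCompact.image_of_continuousOn hf.continuousOn).isBounded
    (L := K * diam F) (by positivity) hη s
  refine (hΘ.image2 (· / ·) hΘ).subset (range_subset_iff.2 fun ⟨w, j⟩ => ?_)
  obtain ⟨a, ha0, ha, hmeas⟩ := hscale (w.map r).prod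
    ⟨NNReal.coe_pos.2 (hF.wordRatio_ne_zero w).bot_lt, hF.wordRatio_le_one w⟩
  have himage {A : Set X}
      (hA : IsIsolatedPiece F A (diam F * (w.map r).prod) (δ * (w.map r).prod)) :
      ∃ θ ∈ Θ, μH[s] (f '' A) = a * θ :=
    hmeas _ ((hA.image hf hf').mono (mul_assoc _ _ _).ge (mul_assoc _ _ _).le)
  obtain ⟨θ, hθ, hw⟩ := himage (hpiece w j).1
  obtain ⟨θ', hθ', hwj⟩ := himage (hpiece w j).2
  refine ⟨θ', hθ', θ, hθ, ?_⟩
  dsimp only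
  rw [hw, hwj, ENNReal.mul_div_mul_left _ _ ha0 ha]

theorem exists_cylinder_with_constant_density_general [MeasurableSpace X] [BorelSpace X]
    (hF : IsDustLikeAttractor g r F) (hlam : lam ∈ Ioo 0 1) (hb : IsFiniteType lam b)
    (hE : f '' F = ⋃ i, (fun x => lam • x + b i) '' (f '' F)) (hf : LipschitzOnWith K f F)
    (hf' : AntilipschitzWith K' (F.domRestrict f)) {s : ℝ≥0} (hs : dimH F = s) :
    ∃ w, ∃ D : ℝ, 0 < D ∧
      ∀ B ⊆ cylinder g F w, μH[s] (f '' B) = ENNReal.ofReal D * μH[s] B := by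
  have htop (w : List (Fin t)) : μH[s] (cylinder g F w) ≠ ⊤ :=
    ((measure_mono (cylinder_subset hF.eq_iUnion w)).trans_lt
      (hF.hausdorffMeasure_lt_top (hF.sum_rpow_le_one_of_dimH_eq hs))).ne
  have hupper {A : Set X} (hA : A ⊆ F) : μH[s] (f '' A) ≤ (K : ℝ≥0∞) ^ (s : ℝ) * μH[s] A :=
    (hf.mono hA).hausdorffMeasure_image_le s.coe_nonneg
  rcases eq_or_ne (μH[s] F) 0 with h0 | h0
  · refine ⟨[], 1, one_pos, fun B hB => ?_⟩
    have hB0 : μH[s] B = 0 := measure_mono_null hB h0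
    rw [hB0, mul_zero, ← nonpos_iff_eq_zero]
    exact (hupper hB).trans_eq (by rw [hB0, mul_zero])
  obtain ⟨ν, hν⟩ := exists_measure_eq_image hF.isCompact hf.continuousOn
    (injOn_iff_injective.2 hf'.injective) μH[s]
  have hνcyl (w : List (Fin t)) : ν (cylinder g F w) = μH[s] (f '' cylinder g F w) :=
    hν _ (cylinder_subset hF.eq_iUnion w)
  have hpos (w : List (Fin t)) : μH[s] (cylinder g F w) ≠ 0 :=
    hF.hausdorffMeasure_cylinder_ne_zero h0 w
  have hνpos (w : List (Fin t)) : ν (cylinder g F w) ≠ 0 := fun h => hpos w <| by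
    have := hausdorffMeasure_le_mul_image_of_antilipschitzWith hf' s
      (cylinder_subset hF.eq_iUnion w)
    rwa [← hνcyl, h, mul_zero, nonpos_iff_eq_zero] at this
  have hνle (w : List (Fin t)) :
      ν (cylinder g F w) ≤ ↑(K ^ (s : ℝ)) * μH[s] (cylinder g F w) := by
    rw [hνcyl, ENNReal.coe_rpow_of_nonneg _ s.coe_nonneg]
    exact hupper (cylinder_subset hF.eq_iUnion w)
  obtain ⟨w, D, hD, hw⟩ := hF.exists_cylinder_measure_eq_mul hpos htop hνpos hνle
    (hF.finite_range_hausdorffMeasure_cylinder_ratio h0 (htop []))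
    (by simpa only [hνcyl] using
      hF.finite_range_hausdorffMeasure_image_ratio hlam hb hE hf hf' s)
  exact ⟨w, D, hD, fun B hB => by
    rw [← hw B hB, hν B (hB.trans (cylinder_subset hF.eq_iUnion w))]⟩

end Main

end

/-- **Lemma 4.** With `E ∈ 𝒜(λ, n, m)`, `F` dust-like and `f : F → E` a
bi-Lipschitz bijection, there are a finite word `w` and a constant `d̄ > 0` such that
`H^s(f(B)) = d̄ · H^s(B)` for every Borel set `B ⊆ F_w`. -/
theorem exists_cylinder_with_constant_density
    (lam : ℝ) (n m : ℕ) (E : Set ℝ) (hE : IsInClassA lam n m E)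
    (d t : ℕ) (ht : 2 ≤ t)
    (F : Set (EuclideanSpace ℝ (Fin d)))
    (g : Fin t → EuclideanSpace ℝ (Fin d) → EuclideanSpace ℝ (Fin d))
    (r : Fin t → ℝ)
    (hr : ∀ j, r j ∈ Set.Ioo (0 : ℝ) 1)
    (hg : ∀ j x y, dist (g j x) (g j y) = r j * dist x y)
    (hFne : F.Nonempty) (hFc : IsCompact F)
    (hFattr : F = ⋃ j, g j '' F)
    (hsep : ∀ j j', j ≠ j' → Disjoint (g j '' F) (g j' '' F))
    (f : EuclideanSpace ℝ (Fin d) → ℝ)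
    (hfim : f '' F = E) (hfinj : Set.InjOn f F)
    (Cf : ℝ) (hCf : 0 < Cf)
    (hbilip : ∀ x ∈ F, ∀ y ∈ F,
      Cf⁻¹ * dist x y ≤ dist (f x) (f y) ∧ dist (f x) (f y) ≤ Cf * dist x y)
    (s : ℝ) (hs : 0 ≤ s)
    (hsE : dimH E = ENNReal.ofReal s) (hsF : dimH F = ENNReal.ofReal s) :
    ∃ (w : List (Fin t)) (dbar : ℝ), 0 < dbar ∧
      ∀ B ⊆ cylinder g F w, MeasurableSet B →
        μH[s] (f '' B) = ENNReal.ofReal dbar * μH[s] B := by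
  lift r to Fin t → NNReal using fun j => (hr j).1.le
  lift s to NNReal using hs
  lift Cf to NNReal using hCf.le
  have hF : IsDustLikeAttractor g r F :=
    { ratio_ne_zero := fun j => (NNReal.coe_pos.1 (hr j).1).ne'
      ratio_lt_one := fun j => NNReal.coe_lt_one.1 (hr j).2
      isSimilitude := hg
      nonempty := hFne
      isCompact := hFc
      eq_iUnion := hFattr
      disjoint := hsep }
  have hf : LipschitzOnWith Cf f F :=
    .of_dist_le_mul fun x hx y hy => (hbilip x hx y hy).2
  have hf' : AntilipschitzWith Cf (F.domRestrict f) :=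
    .of_le_mul_dist fun x y => (inv_mul_le_iff₀ hCf).1 (hbilip x x.2 y y.2).1
  obtain ⟨b, hb, hEb⟩ := hE.exists_isFiniteType
  subst hfim
  obtain ⟨w, D, hD, hw⟩ := exists_cylinder_with_constant_density_general hF hE.1 hb hEb hf hf'
    (hsF.trans ENNReal.ofReal_coe_nnreal)
  exact ⟨w, D, hD, fun B hB _ => hw B hB⟩
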